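/- If b₀ + b₁ ≥ 1, A₀ ≠ A₁ and A₀, A₁ ≥ 1, then the ghost measure μ of f is singular continuous: μ is mutually singular with Lebesgue measure λ on [0,1) and μ({x}) = 0 for every x ∈ ℝ. -/

import Mathlib

open MeasureTheory Filter Topology

/-- The `N`-th approximant to the ghost measure of `f`: the normalised Dirac comb built from
the values of `f` on the fundamental region `[2^N, 2^(N+1))`. -/
noncomputable def ghostApprox (f : ℕ → ℕ) (N : ℕ) : Measure ℝ :=
  (∑ n ∈ Finset.range (2 ^ N), (f (2 ^ N + n) : ENNReal))⁻¹ •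
    ∑ n ∈ Finset.range (2 ^ N), (f (2 ^ N + n) : ENNReal) • Measure.dirac ((n : ℝ) / 2 ^ N)

/-- Weak (vague) convergence of a sequence of finite measures on `ℝ`. -/
def WeakLimit (μs : ℕ → Measure ℝ) (μ : Measure ℝ) : Prop :=
  ∀ g : BoundedContinuousFunction ℝ ℝ,
    Tendsto (fun N => ∫ x, g x ∂(μs N)) atTop (𝓝 (∫ x, g x ∂μ))

/-!
Put `S = A₀ + A₁ ≥ 3`. Passing to the next generation multiplies the total of `f` over a generation
by at least `S`, and that of `f + c` by at most `S` once `c ≥ b₀ + b₁`. Hence every approximant of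
level at least `N`, and so `μ`, gives the `n`-th dyadic interval of length `2⁻ᴺ` mass at most
`(f (2 ^ N + n) + c) / S ^ N`. From a vertex to its child `f + c` grows by a factor at most `S - 1`,
so these bounds decay like `((S - 1) / S) ^ N` and `μ` has no atoms.

For singularity, take `c = (b₀ + b₁) / ε`: the children of `n` then satisfy
`f (2 * n + i) + c ≤ (Aᵢ + ε) * (f n + c)`, so the Hellinger affinity of `μ` and Lebesgue measure
on the intervals of length `2⁻ᴺ` is `O(θ ^ N)` with `θ = (√(A₀ + ε) + √(A₁ + ε)) / √(2 * S)`.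
As `A₀ ≠ A₁`, strict concavity of the square root makes `θ < 1` for small `ε`, and two measures
whose affinity tends to `0` are mutually singular.
-/

section BinaryTree

/-- The sum of `h` over the `2 ^ k` descendants of `m` in generation `k` of the binary tree on `ℕ`
in which the children of `n` are `2 * n` and `2 * n + 1`. -/
def descendantSum {M : Type*} [AddCommMonoid M] (h : ℕ → M) (k m : ℕ) : M :=
  ∑ i ∈ Finset.range (2 ^ k), h (2 ^ k * m + i)

theorem descendantSum_zero {M : Type*} [AddCommMonoid M] (h : ℕ → M) (m : ℕ) :
    descendantSum h 0 m = h m := by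
  simp [descendantSum]

theorem descendantSum_succ {M : Type*} [AddCommMonoid M] (h : ℕ → M) (k m : ℕ) :
    descendantSum h (k + 1) m = descendantSum h k (2 * m) + descendantSum h k (2 * m + 1) := by
  have hpow : 2 ^ (k + 1) = 2 ^ k + 2 ^ k := by ring
  simp only [descendantSum, hpow, Finset.sum_range_add]
  congr 1 <;> exact Finset.sum_congr rfl fun i _ ↦ congrArg h (by ring)

variable {R : Type*} [Semiring R] [PartialOrder R] [IsOrderedRing R] {h : ℕ → R} {r : R}

theorem descendantSum_le_pow_mul (hr : 0 ≤ r)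
    (hstep : ∀ n, 1 ≤ n → h (2 * n) + h (2 * n + 1) ≤ r * h n) (k : ℕ) {m : ℕ} (hm : 1 ≤ m) :
    descendantSum h k m ≤ r ^ k * h m := by
  induction k generalizing m with
  | zero => simp [descendantSum_zero]
  | succ k ih =>
    calc descendantSum h (k + 1) m
        = descendantSum h k (2 * m) + descendantSum h k (2 * m + 1) := descendantSum_succ h k m
      _ ≤ r ^ k * h (2 * m) + r ^ k * h (2 * m + 1) := add_le_add (ih (by lia)) (ih (by lia))
      _ = r ^ k * (h (2 * m) + h (2 * m + 1)) := (mul_add _ _ _).symm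
      _ ≤ r ^ k * (r * h m) := mul_le_mul_of_nonneg_left (hstep m hm) (pow_nonneg hr k)
      _ = r ^ (k + 1) * h m := by rw [pow_succ, mul_assoc]

theorem pow_mul_le_descendantSum (hr : 0 ≤ r)
    (hstep : ∀ n, 1 ≤ n → r * h n ≤ h (2 * n) + h (2 * n + 1)) (k : ℕ) {m : ℕ} (hm : 1 ≤ m) :
    r ^ k * h m ≤ descendantSum h k m := by
  induction k generalizing m with
  | zero => simp [descendantSum_zero]
  | succ k ih =>
    calc r ^ (k + 1) * h m
        = r ^ k * (r * h m) := by rw [pow_succ, mul_assoc]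
      _ ≤ r ^ k * (h (2 * m) + h (2 * m + 1)) :=
          mul_le_mul_of_nonneg_left (hstep m hm) (pow_nonneg hr k)
      _ = r ^ k * h (2 * m) + r ^ k * h (2 * m + 1) := mul_add _ _ _
      _ ≤ descendantSum h k (2 * m) + descendantSum h k (2 * m + 1) :=
          add_le_add (ih (by lia)) (ih (by lia))
      _ = descendantSum h (k + 1) m := (descendantSum_succ h k m).symm

theorem descendant_le_pow_mul (hr : 0 ≤ r) (heven : ∀ n, 1 ≤ n → h (2 * n) ≤ r * h n)
    (hodd : ∀ n, 1 ≤ n → h (2 * n + 1) ≤ r * h n) {k m i : ℕ} (hm : 1 ≤ m) (hi : i < 2 ^ k) :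
    h (2 ^ k * m + i) ≤ r ^ k * h m := by
  induction k generalizing m i with
  | zero => simp [Nat.lt_one_iff.1 hi]
  | succ k ih =>
    have through_child {c i : ℕ} (hc : 1 ≤ c) (hcm : h c ≤ r * h m) (hi : i < 2 ^ k) :
        h (2 ^ k * c + i) ≤ r ^ (k + 1) * h m := by
      rw [pow_succ, mul_assoc]
      exact (ih hc hi).trans (mul_le_mul_of_nonneg_left hcm (pow_nonneg hr k))
    rw [pow_succ] at hi
    obtain hlt | hge := lt_or_ge i (2 ^ k)
    · rw [show 2 ^ (k + 1) * m + i = 2 ^ k * (2 * m) + i by ring]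
      exact through_child (by lia) (heven m hm) hlt
    · obtain ⟨j, rfl⟩ := Nat.exists_eq_add_of_le hge
      rw [show 2 ^ (k + 1) * m + (2 ^ k + j) = 2 ^ k * (2 * m + 1) + j by ring]
      exact through_child (by lia) (hodd m hm) (by lia)

end BinaryTree

section RealInequalities

theorem sqrt_add_sqrt_lt_sqrt_two_mul_add {a b : ℝ} (ha : 0 ≤ a) (hb : 0 ≤ b) (hab : a ≠ b) :
    √a + √b < √(2 * (a + b)) := by
  have hne : √a - √b ≠ 0 := sub_ne_zero.2 fun h ↦ hab ((Real.sqrt_inj ha hb).1 h)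
  apply Real.lt_sqrt_of_sq_lt
  linarith [sq_pos_of_ne_zero hne, Real.sq_sqrt ha, Real.sq_sqrt hb]

theorem exists_sqrt_add_sqrt_lt {a b : ℝ} (ha : 0 ≤ a) (hb : 0 ≤ b) (hab : a ≠ b) :
    ∃ ε ∈ Set.Ioc (0 : ℝ) 1, √(a + ε) + √(b + ε) < √(2 * (a + b)) := by
  have hcont : ContinuousAt (fun ε : ℝ ↦ √(a + ε) + √(b + ε)) 0 := by fun_prop
  have hlt : ∀ᶠ ε in 𝓝[>] (0 : ℝ), √(a + ε) + √(b + ε) < √(2 * (a + b)) :=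
    nhdsWithin_le_nhds <| hcont.eventually_lt continuousAt_const <| by
      simpa only [add_zero] using sqrt_add_sqrt_lt_sqrt_two_mul_add ha hb hab
  exact (Filter.Eventually.and (Ioc_mem_nhdsGT zero_lt_one) hlt).exists

end RealInequalities

section Measures

-- On each `I N i` a common minorant of `μ` and `ν` has mass at most the geometric mean of theirs.
theorem mutuallySingular_of_tendsto_sum_sqrt {α ι κ : Type*} [MeasurableSpace α]
    {μ ν : Measure α} [IsFiniteMeasure μ] [IsFiniteMeasure ν] {l : Filter κ} [l.NeBot]
    {s : κ → Finset ι} {I : κ → ι → Set α} (hcover : ∀ N, ∀ᵐ x ∂ν, ∃ i ∈ s N, x ∈ I N i)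
    (hlim : Tendsto (fun N ↦ ∑ i ∈ s N, √(μ.real (I N i) * ν.real (I N i))) l (𝓝 0)) :
    μ ⟂ₘ ν := by
  refine Measure.mutuallySingular_of_disjoint fun ρ hρμ hρν ↦ ?_
  have : IsFiniteMeasure ρ := isFiniteMeasure_of_le μ hρμ
  have hsum (N : κ) : ρ.real Set.univ ≤ ∑ i ∈ s N, √(μ.real (I N i) * ν.real (I N i)) := by
    have huniv : (⋃ i ∈ s N, I N i) =ᵐ[ρ] Set.univ := by
      rw [eventuallyEq_univ]
      filter_upwards [(Measure.absolutelyContinuous_of_le hρν).ae_le (hcover N)] with x hx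
      simpa using hx
    have hle (i : ι) : ρ.real (I N i) ≤ √(μ.real (I N i) * ν.real (I N i)) := by
      refine Real.le_sqrt_of_sq_le ?_
      rw [sq]
      gcongr
      · exact ENNReal.toReal_mono (measure_ne_top _ _) (hρμ _)
      · exact ENNReal.toReal_mono (measure_ne_top _ _) (hρν _)
    calc ρ.real Set.univ = ρ.real (⋃ i ∈ s N, I N i) := measureReal_congr huniv.symm
      _ ≤ ∑ i ∈ s N, ρ.real (I N i) := measureReal_biUnion_finset_le _ _
      _ ≤ _ := Finset.sum_le_sum fun i _ ↦ hle i
  have hzero : ρ.real Set.univ = 0 :=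
    (ge_of_tendsto' hlim hsum).antisymm measureReal_nonneg
  exact (Measure.measure_univ_eq_zero.1 ((measureReal_eq_zero_iff).1 hzero)).le

theorem WeakLimit.measureReal_le_of_isOpen {μs : ℕ → Measure ℝ} {μ : Measure ℝ}
    [∀ N, IsProbabilityMeasure (μs N)] [IsProbabilityMeasure μ] (hlim : WeakLimit μs μ)
    {U : Set ℝ} (hU : IsOpen U) {c : ℝ} (hc : ∀ᶠ N in atTop, (μs N).real U ≤ c) :
    μ.real U ≤ c := by
  let P (N : ℕ) : ProbabilityMeasure ℝ := ⟨μs N, inferInstance⟩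
  let Q : ProbabilityMeasure ℝ := ⟨μ, inferInstance⟩
  have hPQ : Tendsto P atTop (𝓝 Q) :=
    ProbabilityMeasure.tendsto_iff_forall_integral_tendsto.2 hlim
  have hc0 : 0 ≤ c := hc.exists.elim fun _ ↦ measureReal_nonneg.trans
  refine ENNReal.toReal_le_of_le_ofReal hc0 ?_
  calc μ U ≤ liminf (fun N ↦ μs N U) atTop :=
        ProbabilityMeasure.le_liminf_measure_open_of_tendsto hPQ hU
    _ ≤ ENNReal.ofReal c := liminf_le_of_frequently_le' <| Eventually.frequently <|
        hc.mono fun N hN ↦ (ENNReal.le_ofReal_iff_toReal_le (measure_ne_top _ _) hc0).2 hN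

end Measures

section DyadicCells

/-- The `n`-th half-open dyadic interval of length `2⁻ᴺ`. -/
def dyadicCell (N n : ℕ) : Set ℝ :=
  Set.Ico ((n : ℝ) / 2 ^ N) ((n + 1) / 2 ^ N)

theorem mem_dyadicCell_iff_floor_eq {N n : ℕ} {x : ℝ} (hx : 0 ≤ x) :
    x ∈ dyadicCell N n ↔ ⌊2 ^ N * x⌋₊ = n := by
  rw [dyadicCell, Set.mem_Ico, div_le_iff₀' (by positivity), lt_div_iff₀' (by positivity),
    Nat.floor_eq_iff (by positivity)]

theorem floor_two_pow_mul_lt {x : ℝ} (hx : x ∈ Set.Ico (0 : ℝ) 1) (N : ℕ) :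
    ⌊2 ^ N * x⌋₊ < 2 ^ N := by
  have hpow : (0 : ℝ) < 2 ^ N := by positivity
  rw [Nat.floor_lt (mul_nonneg hpow.le hx.1)]
  push_cast
  exact mul_lt_of_lt_one_right hpow hx.2

theorem volume_real_dyadicCell (N n : ℕ) : volume.real (dyadicCell N n) = (2 ^ N)⁻¹ := by
  have hle : (n : ℝ) / 2 ^ N ≤ (n + 1) / 2 ^ N := by gcongr; linarith
  rw [dyadicCell, Real.volume_real_Ico_of_le hle]
  ring

end DyadicCells

theorem floor_mem_Icc_of_abs_sub_lt_one {x y : ℝ} (hy : 0 ≤ y) (h : |y - x| < 1) :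
    ⌊y⌋₊ ∈ Finset.Icc (⌊x⌋₊ - 1) (⌊x⌋₊ + 1) := by
  obtain ⟨hxy, hyx⟩ := abs_lt.1 h
  rw [Finset.mem_Icc, tsub_le_iff_right]
  constructor
  · rw [← Nat.floor_add_one hy]
    exact Nat.floor_le_floor (by linarith)
  · rw [← Nat.lt_succ_iff, Nat.floor_lt hy]
    push_cast
    linarith [Nat.lt_floor_add_one x]

section GhostApprox

theorem ghostApprox_real_apply (f : ℕ → ℕ) (L : ℕ) {T : Set ℝ} [DecidablePred (· ∈ T)]
    (hT : MeasurableSet T) :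
    (ghostApprox f L).real T =
      (∑ m ∈ Finset.range (2 ^ L) with ((m : ℕ) : ℝ) / 2 ^ L ∈ T, (f (2 ^ L + m) : ℝ)) /
        descendantSum (fun n ↦ (f n : ℝ)) L 1 := by
  have hdirac (m : ℕ) : (f (2 ^ L + m) : ENNReal) * Measure.dirac ((m : ℝ) / 2 ^ L) T =
      ((if (m : ℝ) / 2 ^ L ∈ T then f (2 ^ L + m) else 0 : ℕ) : ENNReal) := by
    rw [Measure.dirac_apply' _ hT]
    split_ifs with hm <;> simp [hm]
  simp only [Measure.real, ghostApprox, Measure.smul_apply, Measure.finsetSum_apply, smul_eq_mul,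
    hdirac, ← Nat.cast_sum, ENNReal.toReal_mul, ENNReal.toReal_inv, ENNReal.toReal_natCast,
    descendantSum, mul_one, Finset.sum_filter]
  rw [inv_mul_eq_div]

theorem isProbabilityMeasure_ghostApprox_of_pos {f : ℕ → ℕ} {L : ℕ}
    (h : 0 < descendantSum (fun n ↦ (f n : ℝ)) L 1) : IsProbabilityMeasure (ghostApprox f L) := by
  classical
  have hreal : (ghostApprox f L).real Set.univ = 1 := by
    rw [ghostApprox_real_apply f L MeasurableSet.univ]
    simp only [Set.mem_univ, Finset.filter_true]
    exact (congrArg (· / _) (by simp [descendantSum])).trans (div_self h.ne')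
  exact ⟨(ENNReal.toReal_eq_one_iff _).1 hreal⟩

theorem sum_filter_le_sum_descendantSum {f : ℕ → ℝ} (hf : ∀ n, 0 ≤ f n) {N : ℕ} (k : ℕ)
    {T : Set ℝ} [DecidablePred (· ∈ T)] {s : Finset ℕ}
    (hs : ∀ x ∈ T ∩ Set.Ico 0 1, ⌊2 ^ N * x⌋₊ ∈ s) :
    ∑ m ∈ Finset.range (2 ^ (N + k)) with ((m : ℕ) : ℝ) / 2 ^ (N + k) ∈ T, f (2 ^ (N + k) + m) ≤
      ∑ n ∈ s, descendantSum f k (2 ^ N + n) := by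
  have hfloor (m : ℕ) : ⌊(2 : ℝ) ^ N * (m / 2 ^ (N + k))⌋₊ = m / 2 ^ k := by
    rw [← Nat.floor_div_eq_div (K := ℝ)]
    congr 1
    push_cast
    rw [pow_add]
    field_simp
  rw [← Finset.sum_fiberwise_of_maps_to (g := (· / 2 ^ k)) (t := s)]
  · refine Finset.sum_le_sum fun n _ ↦ ?_
    calc _ ≤ ∑ m ∈ Finset.Ico (n * 2 ^ k) (n * 2 ^ k + 2 ^ k), f (2 ^ (N + k) + m) := by
          refine Finset.sum_le_sum_of_subset_of_nonneg (fun m hm ↦ ?_) fun _ _ _ ↦ hf _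
          obtain rfl := (Finset.mem_filter.1 hm).2
          exact Finset.mem_Ico.2 ⟨Nat.div_mul_le_self m _, Nat.lt_div_mul_add (by positivity)⟩
      _ = descendantSum f k (2 ^ N + n) := by
          rw [Finset.sum_Ico_eq_sum_range, add_tsub_cancel_left, descendantSum]
          exact Finset.sum_congr rfl fun i _ ↦ congrArg f (by ring)
  · intro m hm
    obtain ⟨hmL, hmT⟩ := Finset.mem_filter.1 hm
    rw [← hfloor]
    refine hs _ ⟨hmT, by positivity, ?_⟩
    rw [div_lt_one (by positivity)]
    exact_mod_cast Finset.mem_range.1 hmL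

end GhostApprox

/-- The affine 2-regular sequences: `f` satisfies `f (2n) = A₀ f(n) + b₀` and
`f (2n + 1) = A₁ f(n) + b₁` for `n ≥ 1`, and starts from a positive value `f 1`;
`f 0` is unconstrained. -/
structure IsAffineTwoRegular (A₀ A₁ b₀ b₁ : ℕ) (f : ℕ → ℕ) : Prop where
  one_le_apply_one : 1 ≤ f 1
  apply_even : ∀ n, 1 ≤ n → f (2 * n) = A₀ * f n + b₀
  apply_odd : ∀ n, 1 ≤ n → f (2 * n + 1) = A₁ * f n + b₁

/-- An upper bound, for `S = A₀ + A₁` and `c` large, for the mass that the approximants of level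
at least `N` give to the dyadic cell `[n / 2 ^ N, (n + 1) / 2 ^ N)`. -/
noncomputable def cellWeight (f : ℕ → ℕ) (S c : ℝ) (N n : ℕ) : ℝ :=
  (f (2 ^ N + n) + c) / S ^ N

namespace IsAffineTwoRegular

variable {A₀ A₁ b₀ b₁ : ℕ} {f : ℕ → ℕ} {c : ℝ} {μ : Measure ℝ}

theorem le_descendantSum (hf : IsAffineTwoRegular A₀ A₁ b₀ b₁ f) (k : ℕ) {m : ℕ}
    (hm : 1 ≤ m) :
    (A₀ + A₁ : ℝ) ^ k * f m ≤ descendantSum (fun n ↦ (f n : ℝ)) k m := by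
  refine pow_mul_le_descendantSum (h := fun n ↦ (f n : ℝ)) (by positivity) (fun n hn ↦ ?_) k hm
  rw [hf.apply_even n hn, hf.apply_odd n hn]
  push_cast
  linarith [b₀.cast_nonneg (α := ℝ), b₁.cast_nonneg (α := ℝ)]

theorem descendantSum_le (hf : IsAffineTwoRegular A₀ A₁ b₀ b₁ f) (hA : 3 ≤ A₀ + A₁)
    (hc : b₀ + b₁ ≤ c) (k : ℕ) {m : ℕ} (hm : 1 ≤ m) :
    descendantSum (fun n ↦ (f n : ℝ)) k m ≤ (A₀ + A₁ : ℝ) ^ k * (f m + c) := by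
  have hA' : (3 : ℝ) ≤ A₀ + A₁ := by exact_mod_cast hA
  have hc0 : 0 ≤ c := le_trans (by positivity) hc
  calc descendantSum (fun n ↦ (f n : ℝ)) k m ≤ descendantSum (fun n ↦ f n + c) k m :=
        Finset.sum_le_sum fun _ _ ↦ le_add_of_nonneg_right hc0
    _ ≤ (A₀ + A₁ : ℝ) ^ k * (f m + c) := by
      refine descendantSum_le_pow_mul (by positivity) (fun n hn ↦ ?_) k hm
      rw [hf.apply_even n hn, hf.apply_odd n hn]
      push_cast
      linarith [mul_le_mul_of_nonneg_right hA' hc0]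

theorem isProbabilityMeasure_ghostApprox (hf : IsAffineTwoRegular A₀ A₁ b₀ b₁ f)
    (hA : 0 < A₀ + A₁) (L : ℕ) : IsProbabilityMeasure (ghostApprox f L) := by
  have hA' : (0 : ℝ) < A₀ + A₁ := by exact_mod_cast hA
  have hf1 : (0 : ℝ) < f 1 := by exact_mod_cast hf.one_le_apply_one
  exact isProbabilityMeasure_ghostApprox_of_pos <|
    lt_of_lt_of_le (by positivity) (hf.le_descendantSum L le_rfl)

theorem ghostApprox_real_le_sum_cellWeight (hf : IsAffineTwoRegular A₀ A₁ b₀ b₁ f)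
    (hA : 3 ≤ A₀ + A₁) (hc : b₀ + b₁ ≤ c) {N : ℕ} (k : ℕ) {T : Set ℝ} (hT : MeasurableSet T)
    {s : Finset ℕ} (hs : ∀ x ∈ T ∩ Set.Ico 0 1, ⌊2 ^ N * x⌋₊ ∈ s) :
    (ghostApprox f (N + k)).real T ≤ ∑ n ∈ s, cellWeight f (A₀ + A₁) c N n := by
  classical
  have hS : (0 : ℝ) < A₀ + A₁ := by exact_mod_cast (by lia : 0 < A₀ + A₁)
  have hc0 : 0 ≤ c := le_trans (by positivity) hc
  have hf1 : (1 : ℝ) ≤ f 1 := by exact_mod_cast hf.one_le_apply_one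
  have htotal : (A₀ + A₁ : ℝ) ^ (N + k) ≤ descendantSum (fun n ↦ (f n : ℝ)) (N + k) 1 :=
    (le_mul_of_one_le_right (by positivity) hf1).trans
      (hf.le_descendantSum (N + k) le_rfl)
  have hcells := sum_filter_le_sum_descendantSum (fun n ↦ (f n).cast_nonneg (α := ℝ)) k hs
  rw [ghostApprox_real_apply f _ hT]
  calc _ ≤ (∑ n ∈ s, (A₀ + A₁ : ℝ) ^ k * (f (2 ^ N + n) + c)) / (A₀ + A₁) ^ (N + k) := by
        gcongr
        exact hcells.trans <| Finset.sum_le_sum fun n _ ↦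
          hf.descendantSum_le hA hc k (Nat.one_le_two_pow.trans (Nat.le_add_right _ n))
    _ = ∑ n ∈ s, cellWeight f (A₀ + A₁) c N n := by
        rw [Finset.sum_div]
        refine Finset.sum_congr rfl fun n _ ↦ ?_
        rw [cellWeight, pow_add]
        field_simp

theorem measureReal_le_sum_cellWeight (hf : IsAffineTwoRegular A₀ A₁ b₀ b₁ f)
    (hA : 3 ≤ A₀ + A₁) (hc : b₀ + b₁ ≤ c) [IsProbabilityMeasure μ]
    (hlim : WeakLimit (ghostApprox f) μ) {N : ℕ} {U : Set ℝ} (hU : IsOpen U) {s : Finset ℕ}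
    (hs : ∀ x ∈ U ∩ Set.Ico 0 1, ⌊2 ^ N * x⌋₊ ∈ s) :
    μ.real U ≤ ∑ n ∈ s, cellWeight f (A₀ + A₁) c N n := by
  have := hf.isProbabilityMeasure_ghostApprox (by lia)
  refine hlim.measureReal_le_of_isOpen hU ?_
  filter_upwards [eventually_ge_atTop N] with L hL
  obtain ⟨k, rfl⟩ := Nat.exists_eq_add_of_le hL
  exact hf.ghostApprox_real_le_sum_cellWeight hA hc k hU.measurableSet hs

theorem cellWeight_le (hf : IsAffineTwoRegular A₀ A₁ b₀ b₁ f) (hA : 3 ≤ A₀ + A₁)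
    (hA₀ : 1 ≤ A₀) (hA₁ : 1 ≤ A₁) (hc : b₀ + b₁ ≤ c) {N n : ℕ} (hn : n < 2 ^ N) :
    cellWeight f (A₀ + A₁) c N n ≤ ((A₀ + A₁ - 1) / (A₀ + A₁) : ℝ) ^ N * (f 1 + c) := by
  have hA' : (3 : ℝ) ≤ A₀ + A₁ := by exact_mod_cast hA
  have hc0 : 0 ≤ c := le_trans (by positivity) hc
  have child_le {A b : ℕ} (hA : A + 1 ≤ A₀ + A₁) (hb : b ≤ b₀ + b₁) (n : ℕ) :
      (A * f n + b : ℕ) + c ≤ (A₀ + A₁ - 1) * (f n + c) := by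
    have hlin : (A + 1 : ℝ) * f n ≤ (A₀ + A₁) * f n :=
      mul_le_mul_of_nonneg_right (by exact_mod_cast hA) (f n).cast_nonneg
    have hconst : 3 * c ≤ (A₀ + A₁) * c := mul_le_mul_of_nonneg_right hA' hc0
    have hb' : (b : ℝ) ≤ b₀ + b₁ := by exact_mod_cast hb
    push_cast
    linarith
  have hmax : f (2 ^ N * 1 + n) + c ≤ (A₀ + A₁ - 1 : ℝ) ^ N * (f 1 + c) := by
    refine descendant_le_pow_mul (h := fun n ↦ f n + c) (by linarith) (fun n hn ↦ ?_)
      (fun n hn ↦ ?_) le_rfl hn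
    · rw [hf.apply_even n hn]
      exact child_le (by lia) (by lia) n
    · rw [hf.apply_odd n hn]
      exact child_le (by lia) (by lia) n
  rw [cellWeight, div_pow, div_mul_eq_mul_div]
  gcongr
  simpa only [mul_one] using hmax

theorem nullSingletonClass (hf : IsAffineTwoRegular A₀ A₁ b₀ b₁ f) (hA : 3 ≤ A₀ + A₁) (hA₀ : 1 ≤ A₀)
    (hA₁ : 1 ≤ A₁) [IsProbabilityMeasure μ] (hlim : WeakLimit (ghostApprox f) μ) :
    NullSingletonClass μ := by
  refine ⟨fun x ↦ (measureReal_eq_zero_iff).1 <| le_antisymm ?_ measureReal_nonneg⟩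
  set c : ℝ := b₀ + b₁
  set ρ : ℝ := (A₀ + A₁ - 1) / (A₀ + A₁)
  have hA' : (3 : ℝ) ≤ A₀ + A₁ := by exact_mod_cast hA
  have hρ0 : 0 ≤ ρ := div_nonneg (by linarith) (by linarith)
  have hρ1 : ρ < 1 := (div_lt_one (by linarith)).2 (by linarith)
  have hbound (N : ℕ) : μ.real {x} ≤ 3 * (ρ ^ N * (f 1 + c)) := by
    set a := ⌊2 ^ N * x⌋₊
    let U : Set ℝ := {y | |2 ^ N * y - 2 ^ N * x| < 1}
    let s := {n ∈ Finset.Icc (a - 1) (a + 1) | n < 2 ^ N}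
    have hU : IsOpen U := isOpen_lt (by fun_prop) continuous_const
    have hs : ∀ y ∈ U ∩ Set.Ico 0 1, ⌊2 ^ N * y⌋₊ ∈ s := fun y ⟨hyU, hy⟩ ↦
      Finset.mem_filter.2 ⟨floor_mem_Icc_of_abs_sub_lt_one (mul_nonneg (by positivity) hy.1) hyU,
        floor_two_pow_mul_lt hy N⟩
    have hcard : s.card ≤ 3 := (Finset.card_filter_le _ _).trans (by rw [Nat.card_Icc]; lia)
    calc μ.real {x} ≤ μ.real U := measureReal_mono (by simp [U])
      _ ≤ ∑ n ∈ s, cellWeight f (A₀ + A₁) c N n :=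
          hf.measureReal_le_sum_cellWeight hA le_rfl hlim hU hs
      _ ≤ s.card • (ρ ^ N * (f 1 + c)) := Finset.sum_le_card_nsmul _ _ _ fun n hn ↦
          hf.cellWeight_le hA hA₀ hA₁ le_rfl (Finset.mem_filter.1 hn).2
      _ ≤ 3 * (ρ ^ N * (f 1 + c)) := by
          rw [nsmul_eq_mul]
          gcongr
          exact_mod_cast hcard
  have hlim0 : Tendsto (fun N : ℕ ↦ 3 * (ρ ^ N * (f 1 + c))) atTop (𝓝 0) := by
    simpa using ((tendsto_pow_atTop_nhds_zero_of_lt_one hρ0 hρ1).mul_const (f 1 + c)).const_mul 3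
  exact ge_of_tendsto' hlim0 hbound

theorem measureReal_dyadicCell_le_cellWeight (hf : IsAffineTwoRegular A₀ A₁ b₀ b₁ f)
    (hA : 3 ≤ A₀ + A₁) (hc : b₀ + b₁ ≤ c) [IsProbabilityMeasure μ] [NullSingletonClass μ]
    (hlim : WeakLimit (ghostApprox f) μ) (N n : ℕ) :
    μ.real (dyadicCell N n) ≤ cellWeight f (A₀ + A₁) c N n := by
  rw [dyadicCell, ← measureReal_congr Ioo_ae_eq_Ico,
    ← Finset.sum_singleton (cellWeight f (A₀ + A₁) c N) n]
  refine hf.measureReal_le_sum_cellWeight hA hc hlim isOpen_Ioo fun x hx ↦ ?_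
  rw [Finset.mem_singleton, ← mem_dyadicCell_iff_floor_eq hx.2.1]
  exact Set.Ioo_subset_Ico_self hx.1

theorem descendantSum_sqrt_le (hf : IsAffineTwoRegular A₀ A₁ b₀ b₁ f) (hA₀ : 1 ≤ A₀)
    (hA₁ : 1 ≤ A₁) {ε : ℝ} (hε : 0 < ε) (N : ℕ) :
    descendantSum (fun n ↦ √(f n + (b₀ + b₁) / ε)) N 1 ≤
      (√(A₀ + ε) + √(A₁ + ε)) ^ N * √(f 1 + (b₀ + b₁) / ε) := by
  set c : ℝ := (b₀ + b₁) / ε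
  have hc0 : 0 ≤ c := by positivity
  have hεc : ε * c = b₀ + b₁ := mul_div_cancel₀ _ hε.ne'
  have child_le {A b : ℕ} (hA : 1 ≤ A) (hb : b ≤ b₀ + b₁) (n : ℕ) :
      √((A * f n + b : ℕ) + c) ≤ √(A + ε) * √(f n + c) := by
    have hA' : (1 : ℝ) ≤ A := by exact_mod_cast hA
    have hb' : (b : ℝ) ≤ ε * c := by rw [hεc]; exact_mod_cast hb
    rw [← Real.sqrt_mul (by positivity)]
    apply Real.sqrt_le_sqrt
    push_cast
    linarith [mul_le_mul_of_nonneg_right hA' hc0, mul_nonneg hε.le (f n).cast_nonneg]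
  refine descendantSum_le_pow_mul (by positivity) (fun n hn ↦ ?_) N le_rfl
  rw [hf.apply_even n hn, hf.apply_odd n hn, add_mul]
  exact add_le_add (child_le hA₀ (by lia) n) (child_le hA₁ (by lia) n)

theorem tendsto_sum_sqrt_cellWeight (hf : IsAffineTwoRegular A₀ A₁ b₀ b₁ f) (hA₀ : 1 ≤ A₀)
    (hA₁ : 1 ≤ A₁) {ε : ℝ} (hε : 0 < ε)
    (hlt : √(A₀ + ε) + √(A₁ + ε) < √(2 * (A₀ + A₁))) :
    Tendsto (fun N : ℕ ↦ ∑ n ∈ Finset.range (2 ^ N),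
      √(cellWeight f (A₀ + A₁) ((b₀ + b₁) / ε) N n * (2 ^ N)⁻¹)) atTop (𝓝 0) := by
  set c : ℝ := (b₀ + b₁) / ε
  set r : ℝ := √(A₀ + ε) + √(A₁ + ε)
  set q : ℝ := √(2 * (A₀ + A₁))
  have hq : 0 < q := lt_of_le_of_lt (by positivity) hlt
  have hpow (N : ℕ) : √((2 * (A₀ + A₁)) ^ N) = q ^ N := by
    simpa only [Finset.prod_const, Finset.card_range] using
      Real.sqrt_prod (Finset.range N) fun _ _ ↦ (by positivity : 0 ≤ 2 * (A₀ + A₁ : ℝ))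
  have hsum (N : ℕ) : ∑ n ∈ Finset.range (2 ^ N),
      √(cellWeight f (A₀ + A₁) c N n * (2 ^ N)⁻¹) =
        descendantSum (fun n ↦ √(f n + c)) N 1 / q ^ N := by
    rw [descendantSum, Finset.sum_div]
    refine Finset.sum_congr rfl fun n _ ↦ ?_
    rw [cellWeight, ← div_eq_mul_inv, div_div, ← mul_pow, mul_comm _ (2 : ℝ),
      Real.sqrt_div (by positivity), hpow, mul_one]
  have hbound (N : ℕ) : descendantSum (fun n ↦ √(f n + c)) N 1 / q ^ N ≤
      (r / q) ^ N * √(f 1 + c) := by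
    rw [div_pow, div_mul_eq_mul_div]
    gcongr
    exact hf.descendantSum_sqrt_le hA₀ hA₁ hε N
  simp only [hsum]
  refine squeeze_zero (fun N ↦ ?_) hbound ?_
  · exact div_nonneg (Finset.sum_nonneg fun _ _ ↦ Real.sqrt_nonneg _) (by positivity)
  · simpa using (tendsto_pow_atTop_nhds_zero_of_lt_one (by positivity)
      ((div_lt_one hq).2 hlt)).mul_const √(f 1 + c)

theorem mutuallySingular_volume (hf : IsAffineTwoRegular A₀ A₁ b₀ b₁ f) (hA : A₀ ≠ A₁)
    (hA₀ : 1 ≤ A₀) (hA₁ : 1 ≤ A₁) [IsProbabilityMeasure μ]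
    (hlim : WeakLimit (ghostApprox f) μ) : μ ⟂ₘ volume.restrict (Set.Ico (0 : ℝ) 1) := by
  have : NullSingletonClass μ := hf.nullSingletonClass (by lia) hA₀ hA₁ hlim
  obtain ⟨ε, ⟨hε0, hε1⟩, hlt⟩ : ∃ ε ∈ Set.Ioc (0 : ℝ) 1,
      √(A₀ + ε) + √(A₁ + ε) < √(2 * (A₀ + A₁)) :=
    exists_sqrt_add_sqrt_lt A₀.cast_nonneg A₁.cast_nonneg (by exact_mod_cast hA)
  have hc : (b₀ + b₁ : ℝ) ≤ (b₀ + b₁) / ε := le_div_self (by positivity) hε0 hε1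
  refine mutuallySingular_of_tendsto_sum_sqrt (s := fun N ↦ Finset.range (2 ^ N))
    (I := dyadicCell) (fun N ↦ ae_restrict_of_forall_mem measurableSet_Ico fun x hx ↦ ?_)
    (squeeze_zero (fun N ↦ ?_) (fun N ↦ ?_) (hf.tendsto_sum_sqrt_cellWeight hA₀ hA₁ hε0 hlt))
  · exact ⟨_, Finset.mem_range.2 (floor_two_pow_mul_lt hx N),
      (mem_dyadicCell_iff_floor_eq hx.1).2 rfl⟩
  · exact Finset.sum_nonneg fun _ _ ↦ Real.sqrt_nonneg _
  · refine Finset.sum_le_sum fun n _ ↦ Real.sqrt_le_sqrt ?_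
    have hvol : (volume.restrict (Set.Ico (0 : ℝ) 1)).real (dyadicCell N n) ≤ (2 ^ N)⁻¹ := by
      rw [← volume_real_dyadicCell N n]
      exact ENNReal.toReal_mono measure_Ico_lt_top.ne (Measure.restrict_apply_le _ _)
    have hμ := hf.measureReal_dyadicCell_le_cellWeight (by lia) hc hlim N n
    exact mul_le_mul hμ hvol measureReal_nonneg (measureReal_nonneg.trans hμ)

end IsAffineTwoRegular

theorem stmt_12_general {A₀ A₁ b₀ b₁ : ℕ} {f : ℕ → ℕ} (hf : IsAffineTwoRegular A₀ A₁ b₀ b₁ f)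
    (hA : A₀ ≠ A₁) (hA₀ : 1 ≤ A₀) (hA₁ : 1 ≤ A₁) {μ : Measure ℝ} [IsProbabilityMeasure μ]
    (hlim : WeakLimit (ghostApprox f) μ) :
    μ ⟂ₘ volume.restrict (Set.Ico (0 : ℝ) 1) ∧ ∀ x : ℝ, μ {x} = 0 :=
  have : NullSingletonClass μ := hf.nullSingletonClass (by lia) hA₀ hA₁ hlim
  ⟨hf.mutuallySingular_volume hA hA₀ hA₁ hlim, measure_singleton⟩

theorem stmt_12 (A₀ A₁ b₀ b₁ : ℕ) (hnz : ¬(A₀ = 0 ∧ A₁ = 0 ∧ b₀ = 0 ∧ b₁ = 0))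
    (f : ℕ → ℕ) (hf1 : 1 ≤ f 1)
    (heven : ∀ n, 1 ≤ n → f (2 * n) = A₀ * f n + b₀)
    (hodd : ∀ n, 1 ≤ n → f (2 * n + 1) = A₁ * f n + b₁)
    (hb : 1 ≤ b₀ + b₁) (hAne : A₀ ≠ A₁) (hA0 : 1 ≤ A₀) (hA1 : 1 ≤ A₁)
    (μ : Measure ℝ) (hμ : IsProbabilityMeasure μ)
    (hlim : WeakLimit (ghostApprox f) μ) :
    μ.MutuallySingular (volume.restrict (Set.Ico (0:ℝ) 1)) ∧
      ∀ x : ℝ, μ {x} = 0 := by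
  exact stmt_12_general ⟨hf1, heven, hodd⟩ hAne hA0 hA1 hlim
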